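/- arXiv:2502.20856 — 5 statements merged into one kernel-verified Lean document; each statement's English description precedes it below -/
import Mathlib

section
/- Let c ∈ ℝ^K have all entries positive and suppose k ∈ I_+(c). Denote by e_k the k-th standard basis vector of ℝ^K. Then there exists δ₀ > 0 such that: for all δ with 0 < δ < δ₀, ν(c + δ e_k) = ν(c) + σ² δ / (|I_+(c)| + |I_0(c)|); and for all δ with −δ₀ < δ < 0, ν(c + δ e_k) = ν(c) + σ² δ / |I_+(c)|. -/
open Classical in
/-- The unique positive solution ν(c) of the water-filling equation
Σ_k max(ν − σ² c_k, 0) = P_T. -/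
noncomputable def waterLevel (K : ℕ) (σ2 PT : ℝ) (c : Fin K → ℝ) : ℝ :=
  if h : ∃ ν : ℝ, 0 < ν ∧ ∑ k : Fin K, max (ν - σ2 * c k) 0 = PT then h.choose else 0

/-- The water-filling power allocation p_k(c) = max(ν(c)/c_k − σ², 0). -/
noncomputable def wfPower (K : ℕ) (σ2 PT : ℝ) (c : Fin K → ℝ) (k : Fin K) : ℝ :=
  max (waterLevel K σ2 PT c / c k - σ2) 0

/-- The resulting sum rate R(c) = Σ_k log₂(1 + p_k(c)/σ²). -/
noncomputable def sumRate (K : ℕ) (σ2 PT : ℝ) (c : Fin K → ℝ) : ℝ :=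
  ∑ k : Fin K, Real.logb 2 (1 + wfPower K σ2 PT c k / σ2)

/-!
Move `c` along `c + r d` and the level along `ν + r m`, with `r > 0` small. Strict inequalities
between `ν` and `σ² c i` persist, and a tie `ν = σ² c i` is resolved by the sign of `m - σ² d i`. If
`S` is the resulting set of active channels, the volume is affine in `r` with slope
`∑ i ∈ S, (m - σ² d i)`; since the volume determines the level, the level moves at the rate `m` that
makes this slope vanish. For `d = e_k` the level rises and the tied channels join `S`; for
`d = -e_k` it falls and they stay out.
-/

open Filter Topology

section WaterVolume

variable {ι : Type*} [Fintype ι] {a b : ι → ℝ} {ν m : ℝ}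

/-- The volume of water over a terrain of floor heights `a` when the surface is at height `ν`. With
`a = σ² c` this is the left-hand side of the water-filling equation. -/
def waterVolume (a : ι → ℝ) (ν : ℝ) : ℝ :=
  ∑ i, max (ν - a i) 0

lemma exists_lt_of_waterVolume_pos (h : 0 < waterVolume a ν) : ∃ i, a i < ν := by
  by_contra! hle
  exact h.not_ge (Finset.sum_nonpos fun i _ ↦ max_le (sub_nonpos.2 (hle i)) le_rfl)

lemma strictMonoOn_waterVolume (a : ι → ℝ) :
    StrictMonoOn (waterVolume a) {ν | 0 < waterVolume a ν} := by
  intro ν hν μ _ hνμ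
  obtain ⟨i, hi⟩ := exists_lt_of_waterVolume_pos hν
  refine Finset.sum_lt_sum (fun j _ ↦ by gcongr) ⟨i, Finset.mem_univ i, ?_⟩
  rw [max_eq_left (by linarith), max_eq_left (by linarith)]
  gcongr

lemma eventually_add_mul_pos {x : ℝ} (hx : 0 < x) (y : ℝ) :
    ∀ᶠ r in 𝓝[>] (0 : ℝ), 0 < x + r * y := by
  have hcont : Continuous fun r : ℝ ↦ x + r * y := by fun_prop
  exact nhdsWithin_le_nhds (hcont.tendsto' 0 x (by simp) |>.eventually_const_lt hx)

lemma eventually_add_mul_nonneg {x y : ℝ} (h : 0 < x ∨ x = 0 ∧ 0 ≤ y) :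
    ∀ᶠ r in 𝓝[>] (0 : ℝ), 0 ≤ x + r * y := by
  rcases h with hx | ⟨rfl, hy⟩
  · exact (eventually_add_mul_pos hx y).mono fun _ ↦ le_of_lt
  · filter_upwards [self_mem_nhdsWithin] with r (hr : 0 < r)
    positivity

lemma eventually_max_add_mul_zero_of_nonneg {x y : ℝ} (h : 0 < x ∨ x = 0 ∧ 0 ≤ y) :
    ∀ᶠ r in 𝓝[>] (0 : ℝ), max (x + r * y) 0 = max x 0 + r * y := by
  have hx : 0 ≤ x := h.elim le_of_lt fun h ↦ h.1.ge
  filter_upwards [eventually_add_mul_nonneg h] with r hr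
  rw [max_eq_left hr, max_eq_left hx]

lemma eventually_max_add_mul_zero_of_nonpos {x y : ℝ} (h : x < 0 ∨ x = 0 ∧ y ≤ 0) :
    ∀ᶠ r in 𝓝[>] (0 : ℝ), max (x + r * y) 0 = max x 0 := by
  have hx : x ≤ 0 := h.elim le_of_lt fun h ↦ h.1.le
  have hneg : 0 < -x ∨ -x = 0 ∧ 0 ≤ -y := by simpa using h
  filter_upwards [eventually_add_mul_nonneg hneg] with r hr
  rw [max_eq_right (by linarith), max_eq_right hx]

lemma eventually_waterVolume_add_smul {S : Finset ι}
    (hS : ∀ i ∈ S, a i < ν ∨ a i = ν ∧ b i ≤ m)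
    (hSc : ∀ i ∉ S, ν < a i ∨ a i = ν ∧ m ≤ b i) :
    ∀ᶠ r in 𝓝[>] (0 : ℝ),
      waterVolume (a + r • b) (ν + r * m) = waterVolume a ν + r * ∑ i ∈ S, (m - b i) := by
  classical
  have hterm : ∀ i, ∀ᶠ r in 𝓝[>] (0 : ℝ), max (ν - a i + r * (m - b i)) 0 =
      max (ν - a i) 0 + if i ∈ S then r * (m - b i) else 0 := by
    intro i
    by_cases hi : i ∈ S
    · simp only [if_pos hi]
      exact eventually_max_add_mul_zero_of_nonneg <| (hS i hi).imp sub_pos.2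
        fun h ↦ ⟨sub_eq_zero.2 h.1.symm, sub_nonneg.2 h.2⟩
    · simp only [if_neg hi, add_zero]
      exact eventually_max_add_mul_zero_of_nonpos <| (hSc i hi).imp sub_neg.2
        fun h ↦ ⟨sub_eq_zero.2 h.1.symm, sub_nonpos.2 h.2⟩
  filter_upwards [eventually_all.2 hterm] with r hr
  calc waterVolume (a + r • b) (ν + r * m)
      = ∑ i, max (ν - a i + r * (m - b i)) 0 := by
        refine Finset.sum_congr rfl fun i _ ↦ ?_
        rw [Pi.add_apply, Pi.smul_apply, smul_eq_mul]
        ring_nf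
    _ = waterVolume a ν + r * ∑ i ∈ S, (m - b i) := by
        simp_rw [hr, Finset.sum_add_distrib, Finset.sum_ite_mem, Finset.univ_inter,
          Finset.mul_sum, waterVolume]

lemma card_filter_lt_add_card_filter_eq {α : Type*} [LinearOrder α] (f : ι → α) (x : α) :
    (Finset.univ.filter fun i ↦ f i < x).card + (Finset.univ.filter fun i ↦ x = f i).card =
      (Finset.univ.filter fun i ↦ f i ≤ x).card := by
  classical
  rw [← Finset.card_union_of_disjoint (Finset.disjoint_filter.2 fun i _ h ↦ h.ne'),
    ← Finset.filter_or]
  simp only [le_iff_lt_or_eq, eq_comm]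

end WaterVolume

section WaterLevel

variable {K : ℕ} {σ2 PT : ℝ} {c : Fin K → ℝ}

lemma waterVolume_waterLevel (hν : 0 < waterLevel K σ2 PT c) :
    waterVolume (σ2 • c) (waterLevel K σ2 PT c) = PT := by
  unfold waterLevel at hν ⊢
  split_ifs at hν ⊢ with h
  · exact h.choose_spec.2
  · exact absurd hν (lt_irrefl 0)

lemma waterLevel_eq_of_waterVolume_eq (hPT : 0 < PT) {x : ℝ} (hx : 0 < x)
    (h : waterVolume (σ2 • c) x = PT) : waterLevel K σ2 PT c = x := by
  have hex : ∃ ν : ℝ, 0 < ν ∧ ∑ k : Fin K, max (ν - σ2 * c k) 0 = PT := ⟨x, hx, h⟩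
  have hν : 0 < waterLevel K σ2 PT c := by
    rw [waterLevel, dif_pos hex]
    exact hex.choose_spec.1
  have hvol := waterVolume_waterLevel hν
  exact (strictMonoOn_waterVolume (σ2 • c)).injOn (hPT.trans_eq hvol.symm) (hPT.trans_eq h.symm)
    (hvol.trans h.symm)

lemma eventually_waterLevel_add_smul (hPT : 0 < PT) (hν : 0 < waterLevel K σ2 PT c)
    {d : Fin K → ℝ} {m : ℝ} {S : Finset (Fin K)}
    (hS : ∀ i ∈ S, σ2 * c i < waterLevel K σ2 PT c ∨
      σ2 * c i = waterLevel K σ2 PT c ∧ σ2 * d i ≤ m)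
    (hSc : ∀ i ∉ S, waterLevel K σ2 PT c < σ2 * c i ∨
      σ2 * c i = waterLevel K σ2 PT c ∧ m ≤ σ2 * d i)
    (hm : S.card * m = σ2 * ∑ i ∈ S, d i) :
    ∀ᶠ r in 𝓝[>] (0 : ℝ), waterLevel K σ2 PT (c + r • d) = waterLevel K σ2 PT c + r * m := by
  have hbalance : ∑ i ∈ S, (m - (σ2 • d) i) = 0 := by
    simp [Finset.sum_sub_distrib, ← Finset.mul_sum, hm]
  filter_upwards [eventually_add_mul_pos hν m,
    eventually_waterVolume_add_smul (a := σ2 • c) (b := σ2 • d) hS hSc] with r hpos hvol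
  refine waterLevel_eq_of_waterVolume_eq hPT hpos ?_
  rw [smul_add, smul_comm σ2 r d, hvol, hbalance, mul_zero, add_zero, waterVolume_waterLevel hν]

variable {k : Fin K}

lemma eventually_nhdsGT_waterLevel_add_smul_single (hσ2 : 0 ≤ σ2) (hPT : 0 < PT)
    (hν : 0 < waterLevel K σ2 PT c) (hk : σ2 * c k < waterLevel K σ2 PT c) :
    ∀ᶠ δ in 𝓝[>] (0 : ℝ), waterLevel K σ2 PT (c + δ • (Pi.single k 1 : Fin K → ℝ)) =
      waterLevel K σ2 PT c +
        σ2 * δ / (Finset.univ.filter fun i ↦ σ2 * c i ≤ waterLevel K σ2 PT c).card := by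
  set S := Finset.univ.filter fun i ↦ σ2 * c i ≤ waterLevel K σ2 PT c with hSdef
  have hkS : k ∈ S := by simp [hSdef, hk.le]
  have hcard : (S.card : ℝ) ≠ 0 := by exact_mod_cast Finset.card_ne_zero_of_mem hkS
  have hrate := eventually_waterLevel_add_smul (d := Pi.single k 1) (m := σ2 / S.card) (S := S)
    hPT hν ?active ?inactive ?balance
  case active =>
    intro i hi
    refine (Finset.mem_filter.1 hi).2.lt_or_eq.imp_right fun htie ↦ ⟨htie, ?_⟩
    have hik : i ≠ k := by rintro rfl; exact hk.ne htie
    rw [Pi.single_eq_of_ne hik, mul_zero]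
    positivity
  case inactive =>
    intro i hi
    exact .inl (by simpa [hSdef] using hi)
  case balance =>
    rw [Finset.sum_pi_single', if_pos hkS, mul_one, mul_div_cancel₀ _ hcard]
  filter_upwards [hrate] with δ hδ
  rw [hδ, mul_div_right_comm, mul_comm δ]

lemma eventually_nhdsLT_waterLevel_add_smul_single (hσ2 : 0 ≤ σ2) (hPT : 0 < PT)
    (hν : 0 < waterLevel K σ2 PT c) (hk : σ2 * c k < waterLevel K σ2 PT c) :
    ∀ᶠ δ in 𝓝[<] (0 : ℝ), waterLevel K σ2 PT (c + δ • (Pi.single k 1 : Fin K → ℝ)) =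
      waterLevel K σ2 PT c +
        σ2 * δ / (Finset.univ.filter fun i ↦ σ2 * c i < waterLevel K σ2 PT c).card := by
  set S := Finset.univ.filter fun i ↦ σ2 * c i < waterLevel K σ2 PT c with hSdef
  have hkS : k ∈ S := by simp [hSdef, hk]
  have hcard : (S.card : ℝ) ≠ 0 := by exact_mod_cast Finset.card_ne_zero_of_mem hkS
  have hrate := eventually_waterLevel_add_smul (d := -Pi.single k 1) (m := -(σ2 / S.card)) (S := S)
    hPT hν ?active ?inactive ?balance
  case active =>
    intro i hi
    exact .inl (Finset.mem_filter.1 hi).2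
  case inactive =>
    intro i hi
    have hle : waterLevel K σ2 PT c ≤ σ2 * c i := by simpa [hSdef] using hi
    refine hle.lt_or_eq.imp_right fun htie ↦ ⟨htie.symm, ?_⟩
    have hik : i ≠ k := ne_of_mem_of_not_mem hkS hi |>.symm
    rw [Pi.neg_apply, Pi.single_eq_of_ne hik, neg_zero, mul_zero, neg_nonpos]
    positivity
  case balance =>
    simp only [Pi.neg_apply, Finset.sum_neg_distrib, Finset.sum_pi_single', if_pos hkS]
    rw [mul_neg, mul_neg, mul_one, mul_div_cancel₀ _ hcard]
  have hneg : Tendsto (fun δ : ℝ ↦ -δ) (𝓝[<] 0) (𝓝[>] 0) := by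
    simpa using tendsto_neg_nhdsLT (a := (0 : ℝ))
  filter_upwards [hneg.eventually hrate] with δ hδ
  rw [neg_smul_neg, neg_mul_neg] at hδ
  rw [hδ, mul_div_right_comm, mul_comm δ]

end WaterLevel

theorem stmt4_general {K : ℕ} {σ2 PT : ℝ} (hσ2 : 0 ≤ σ2) (hPT : 0 < PT) {c : Fin K → ℝ}
    {k : Fin K} (hν : 0 < waterLevel K σ2 PT c) (hk : σ2 * c k < waterLevel K σ2 PT c) :
    ∃ δ₀ > (0 : ℝ),
      (∀ δ, 0 < δ → δ < δ₀ →
        waterLevel K σ2 PT (c + δ • (Pi.single k 1 : Fin K → ℝ))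
          = waterLevel K σ2 PT c + σ2 * δ /
              (((Finset.univ.filter fun i ↦ σ2 * c i < waterLevel K σ2 PT c).card : ℝ) +
                (Finset.univ.filter fun i ↦ waterLevel K σ2 PT c = σ2 * c i).card)) ∧
      (∀ δ, -δ₀ < δ → δ < 0 →
        waterLevel K σ2 PT (c + δ • (Pi.single k 1 : Fin K → ℝ))
          = waterLevel K σ2 PT c + σ2 * δ /
              (Finset.univ.filter fun i ↦ σ2 * c i < waterLevel K σ2 PT c).card) := by
  have hright := eventually_nhdsGT_waterLevel_add_smul_single hσ2 hPT hν hk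
  have hleft := eventually_nhdsLT_waterLevel_add_smul_single hσ2 hPT hν hk
  rw [eventually_nhdsWithin_iff] at hright hleft
  obtain ⟨δ₀, hδ₀, hball⟩ := Metric.eventually_nhds_iff.1 (hright.and hleft)
  refine ⟨δ₀, hδ₀, fun δ hpos hlt ↦ ?_, fun δ hlt hneg ↦ ?_⟩
  · rw [← Nat.cast_add, card_filter_lt_add_card_filter_eq]
    exact (hball (by rwa [Real.dist_0_eq_abs, abs_of_pos hpos])).1 hpos
  · exact (hball (by rwa [Real.dist_0_eq_abs, abs_of_neg hneg, neg_lt])).2 hneg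

/-- one-sided behaviour of the water level under a perturbation of an
active coordinate k ∈ I₊(c), where e_k is the k-th standard basis vector. -/
theorem stmt4 (K : ℕ) (hK : 1 ≤ K) (σ2 PT : ℝ) (hσ2 : 0 < σ2) (hPT : 0 < PT)
    (c : Fin K → ℝ) (hc : ∀ k, 0 < c k) (k : Fin K)
    (hk : σ2 * c k < waterLevel K σ2 PT c) :
    ∃ δ₀ > (0 : ℝ),
      (∀ δ : ℝ, 0 < δ → δ < δ₀ →
        waterLevel K σ2 PT (c + δ • (Pi.single k 1 : Fin K → ℝ))
          = waterLevel K σ2 PT c + σ2 * δ /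
              (((Finset.univ.filter (fun i : Fin K => σ2 * c i < waterLevel K σ2 PT c)).card : ℝ) +
               ((Finset.univ.filter (fun i : Fin K => waterLevel K σ2 PT c = σ2 * c i)).card : ℝ))) ∧
      (∀ δ : ℝ, -δ₀ < δ → δ < 0 →
        waterLevel K σ2 PT (c + δ • (Pi.single k 1 : Fin K → ℝ))
          = waterLevel K σ2 PT c + σ2 * δ /
              ((Finset.univ.filter (fun i : Fin K => σ2 * c i < waterLevel K σ2 PT c)).card : ℝ)) := by
  exact stmt4_general hσ2.le hPT ((mul_pos hσ2 (hc k)).trans hk) hk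
end

section
/- Fix an index n, a direction e ∈ ℝ², a matrix Ψ ∈ ℂ^{L×K}, and suppose C_H = Ψ^H Q Q^H Ψ ∈ ℂ^{K×K} is invertible. Let ξ_k ∈ ℂ^L be the k-th column of Ψ C_H^{-1}. Then for every k, the function t ↦ [(Ψ^H Q(t) Q(t)^H Ψ)^{-1}]_{kk} is differentiable at t = 0 with derivative q̃_n^H Diag(ξ_k) Λ^e Diag(ξ_k)^H q̃_n. -/
open Matrix

/-- The field-response matrix of the antenna positions r with the n-th position
perturbed to r_n + t·e: entries Q(t)_{lm} = exp(j κ_l^T r_m(t)). -/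
noncomputable def Qmat (L N : ℕ) (κ : Fin L → Fin 2 → ℝ) (r : Fin N → Fin 2 → ℝ)
    (n : Fin N) (e : Fin 2 → ℝ) (t : ℝ) : Matrix (Fin L) (Fin N) ℂ :=
  Matrix.of fun l m =>
    Complex.exp (Complex.I * ((κ l ⬝ᵥ (if m = n then r m + t • e else r m) : ℝ) : ℂ))

/-!
If the antennas move along `r` with velocity `v`, each entry `exp(j κ_lᵀ r_m)` of `Q` changes at
`j κ_lᵀ v_m` times its value, so the product rule gives `(Q Qᴴ)' = ∑ₘ Λ^{v_m} ⊙ (q̃_m q̃_mᴴ)`.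
As `C = Ψᴴ Q Qᴴ Ψ` is Hermitian, the formula `(C⁻¹)' = -C⁻¹ C' C⁻¹` reads
`(C⁻¹)' = -Ξᴴ (Q Qᴴ)' Ξ` with `Ξ = Ψ C⁻¹`. On the diagonal, exchanging the roles of `ξ_k` and `q̃_m`
in the quadratic form transposes `Λ`, and its skew-symmetry absorbs the minus sign.
-/

section MatrixDerivative

variable {𝕜 R l m n : Type*} [NontriviallyNormedField 𝕜] {t : 𝕜}

section NormedRing

variable [NormedRing R] [NormedAlgebra 𝕜 R] [Finite n]

theorem hasDerivAt_matrix_iff {A : 𝕜 → Matrix m n R} {A' : Matrix m n R} :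
    HasDerivAt A A' t ↔ ∀ i j, HasDerivAt (fun s ↦ A s i j) (A' i j) t :=
  have := Fintype.ofFinite n
  hasDerivAt_pi.trans <| forall_congr' fun _ ↦ hasDerivAt_pi

theorem hasDerivAt_matrix_mul [Fintype m] {A : 𝕜 → Matrix l m R} {B : 𝕜 → Matrix m n R}
    {A' : Matrix l m R} {B' : Matrix m n R} (hA : HasDerivAt A A' t) (hB : HasDerivAt B B' t) :
    HasDerivAt (fun s ↦ A s * B s) (A' * B t + A t * B') t := by
  rw [hasDerivAt_matrix_iff] at *
  intro i k
  simp only [Matrix.add_apply, Matrix.mul_apply, ← Finset.sum_add_distrib]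
  exact HasDerivAt.fun_sum fun j _ ↦ (hA i j).mul (hB j k)

theorem hasDerivAt_matrix_conjTranspose [Finite m] [StarRing R] [ContinuousStar R]
    [StarRing 𝕜] [TrivialStar 𝕜] [StarModule 𝕜 R] {A : 𝕜 → Matrix m n R} {A' : Matrix m n R}
    (hA : HasDerivAt A A' t) : HasDerivAt (fun s ↦ (A s)ᴴ) A'ᴴ t :=
  hasDerivAt_matrix_iff.mpr fun i j ↦ (hasDerivAt_matrix_iff.mp hA j i).star

end NormedRing

variable [NormedCommRing R] [NormedAlgebra 𝕜 R] [CompleteSpace R] [Fintype l] [Fintype n]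
  [DecidableEq n]

open scoped Matrix.Norms.Operator in
theorem hasDerivAt_matrix_inv {A : 𝕜 → Matrix n n R} {A' : Matrix n n R}
    (hA : HasDerivAt A A' t) (hu : IsUnit (A t)) :
    HasDerivAt (fun s ↦ (A s)⁻¹) (-((A t)⁻¹ * A' * (A t)⁻¹)) t := by
  -- The uniform structure of the norm is the product one only after unfolding, so instance search
  -- does not see that it is complete.
  have : HasSummableGeomSeries (Matrix n n R) :=
    @instHasSummableGeomSeriesOfCompleteSpace _ _ (instCompleteSpace n n R)
  obtain ⟨u, hu⟩ := hu
  have hinv := hasFDerivAt_ringInverse (𝕜 := 𝕜) u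
  simp only [nonsing_inv_eq_ringInverse, ← hu, Ring.inverse_unit]
  exact (hu ▸ hinv).comp_hasDerivAt t hA

theorem hasDerivAt_inv_conjTranspose_mul_mul [StarRing R] {G : 𝕜 → Matrix l l R}
    {G' : Matrix l l R} (hG : HasDerivAt G G' t) (hGt : (G t).IsHermitian) (X : Matrix l n R)
    (hu : IsUnit (Xᴴ * G t * X)) :
    HasDerivAt (fun s ↦ (Xᴴ * G s * X)⁻¹)
      (-((X * (Xᴴ * G t * X)⁻¹)ᴴ * G' * (X * (Xᴴ * G t * X)⁻¹))) t := by
  have hXGX : HasDerivAt (fun s ↦ Xᴴ * G s * X) (Xᴴ * G' * X) t := by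
    have hX : HasDerivAt (fun _ ↦ X) 0 t :=
      hasDerivAt_matrix_iff.mpr fun _ _ ↦ hasDerivAt_const ..
    have hXH : HasDerivAt (fun _ ↦ Xᴴ) 0 t :=
      hasDerivAt_matrix_iff.mpr fun _ _ ↦ hasDerivAt_const ..
    simpa using hasDerivAt_matrix_mul (hasDerivAt_matrix_mul hXH hG) hX
  have hinv : ((Xᴴ * G t * X)⁻¹)ᴴ = (Xᴴ * G t * X)⁻¹ :=
    (isHermitian_conjTranspose_mul_mul X hGt).inv
  rw [conjTranspose_mul, hinv]
  simpa only [Matrix.mul_assoc] using hasDerivAt_matrix_inv hXGX hu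

end MatrixDerivative

theorem conjTranspose_mul_hadamard_vecMulVec_mul_apply_self {R l n : Type*} [CommSemiring R]
    [StarRing R] [Fintype l] [DecidableEq l] (X : Matrix l n R) (M : Matrix l l R)
    (q : l → R) (k : n) :
    (Xᴴ * (M ⊙ vecMulVec q (star q)) * X) k k =
      star q ⬝ᵥ ((diagonal (X.col k) * Mᵀ * (diagonal (X.col k))ᴴ) *ᵥ q) := by
  simp only [Matrix.mul_apply (N := X), Matrix.mul_apply (M := Xᴴ), conjTranspose_apply,
    hadamard_apply, vecMulVec_apply, dotProduct, mulVec, diagonal_conjTranspose, mul_diagonal,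
    diagonal_mul, transpose_apply, col_apply, Pi.star_apply, Finset.sum_mul, Finset.mul_sum]
  exact Finset.sum_congr rfl fun _ _ ↦ Finset.sum_congr rfl fun _ _ ↦ by ring

section FieldResponse

variable {ι ν δ μ : Type*} [Fintype δ]

/-- The field-response matrix `Q` of the wavevectors `κ` and the antenna positions `r`, in any
dimension. `Qmat` is the planar case along a line on which a single antenna moves. -/
noncomputable def fieldResponse (κ : ι → δ → ℝ) (r : ν → δ → ℝ) : Matrix ι ν ℂ :=
  of fun l m ↦ Complex.exp (Complex.I * (κ l ⬝ᵥ r m : ℝ))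

/-- The matrix `Λ^e`: its `(i, l)` entry is the logarithmic derivative of the product of the
response of path `i` and the conjugate response of path `l` at an antenna moving with velocity
`e`. -/
noncomputable def phaseRate (κ : ι → δ → ℝ) (e : δ → ℝ) : Matrix ι ι ℂ :=
  of fun i l ↦ Complex.I * ((κ i - κ l) ⬝ᵥ e : ℝ)

theorem phaseRate_transpose (κ : ι → δ → ℝ) (e : δ → ℝ) :
    (phaseRate κ e)ᵀ = -phaseRate κ e := by
  ext i l
  simp [phaseRate, ← mul_neg]

theorem phaseRate_zero (κ : ι → δ → ℝ) : phaseRate κ 0 = 0 := by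
  ext
  simp [phaseRate]

variable {r : ℝ → ν → δ → ℝ} {v : ν → δ → ℝ} {t : ℝ}

theorem hasDerivAt_fieldResponse [Finite ν] (κ : ι → δ → ℝ) (hr : HasDerivAt r v t) :
    HasDerivAt (fun s ↦ fieldResponse κ (r s))
      (of fun l m ↦ Complex.I * (κ l ⬝ᵥ v m : ℝ) * fieldResponse κ (r t) l m) t := by
  refine hasDerivAt_matrix_iff.mpr fun l m ↦ ?_
  have hphase : HasDerivAt (fun s ↦ κ l ⬝ᵥ r s m) (κ l ⬝ᵥ v m) t :=
    HasDerivAt.fun_sum fun d _ ↦ (hasDerivAt_pi.mp (hasDerivAt_pi.mp hr m) d).const_mul (κ l d)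
  simpa only [fieldResponse, of_apply, mul_comm] using (hphase.ofReal_comp.const_mul Complex.I).cexp

theorem hasDerivAt_fieldResponse_mul_conjTranspose [Finite ι] [Fintype ν] (κ : ι → δ → ℝ)
    (hr : HasDerivAt r v t) :
    HasDerivAt (fun s ↦ fieldResponse κ (r s) * (fieldResponse κ (r s))ᴴ)
      (∑ m, phaseRate κ (v m) ⊙ vecMulVec ((fieldResponse κ (r t)).col m)
        (star ((fieldResponse κ (r t)).col m))) t := by
  have hQ := hasDerivAt_fieldResponse κ hr
  convert hasDerivAt_matrix_mul hQ (hasDerivAt_matrix_conjTranspose hQ) using 1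
  ext i l
  simp only [Matrix.add_apply, Matrix.mul_apply, Matrix.sum_apply, ← Finset.sum_add_distrib]
  refine Finset.sum_congr rfl fun m _ ↦ ?_
  simp only [conjTranspose_apply, of_apply, hadamard_apply, vecMulVec_apply, col_apply,
    Pi.star_apply, phaseRate, sub_dotProduct, star_mul, Complex.star_def, Complex.conj_I,
    Complex.conj_ofReal, Complex.ofReal_sub]
  ring

theorem sum_star_dotProduct_phaseRate_single [Fintype ι] [Fintype ν] [DecidableEq ν]
    (κ : ι → δ → ℝ) (e : δ → ℝ) (n : ν) (Q : Matrix ι ν ℂ) (A B : Matrix ι ι ℂ) :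
    ∑ m, star (Q.col m) ⬝ᵥ
        ((A * phaseRate κ ((Pi.single n e : ν → δ → ℝ) m) * B) *ᵥ Q.col m) =
      star (Q.col n) ⬝ᵥ ((A * phaseRate κ e * B) *ᵥ Q.col n) := by
  rw [Fintype.sum_eq_single n fun m hm ↦ by simp [Pi.single_eq_of_ne hm, phaseRate_zero],
    Pi.single_eq_same]

theorem stmt7_general [Fintype ι] [DecidableEq ι] [Fintype ν] [Fintype μ] [DecidableEq μ]
    (κ : ι → δ → ℝ) (hr : HasDerivAt r v t) (Ψ : Matrix ι μ ℂ)
    (hC : IsUnit (Ψᴴ * (fieldResponse κ (r t) * (fieldResponse κ (r t))ᴴ) * Ψ)) (k : μ) :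
    let Q := fun s ↦ fieldResponse κ (r s)
    let ξ := (Ψ * (Ψᴴ * (Q t * (Q t)ᴴ) * Ψ)⁻¹).col k
    HasDerivAt (fun s ↦ (Ψᴴ * (Q s * (Q s)ᴴ) * Ψ)⁻¹ k k)
      (∑ m, star ((Q t).col m) ⬝ᵥ
        ((diagonal ξ * phaseRate κ (v m) * (diagonal ξ)ᴴ) *ᵥ (Q t).col m)) t := by
  intro Q ξ
  have hinv := hasDerivAt_inv_conjTranspose_mul_mul
    (hasDerivAt_fieldResponse_mul_conjTranspose κ hr) (isHermitian_mul_conjTranspose_self _) Ψ hC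
  refine (hasDerivAt_matrix_iff.mp hinv k k).congr_deriv ?_
  simp only [Matrix.neg_apply, Matrix.mul_sum, Matrix.sum_mul, Matrix.sum_apply,
    conjTranspose_mul_hadamard_vecMulVec_mul_apply_self, phaseRate_transpose, Matrix.mul_neg,
    Matrix.neg_mul, neg_mulVec, dotProduct_neg, Finset.sum_neg_distrib, neg_neg, Q, ξ]

end FieldResponse

theorem Qmat_eq_fieldResponse (L N : ℕ) (κ : Fin L → Fin 2 → ℝ) (r : Fin N → Fin 2 → ℝ)
    (n : Fin N) (e : Fin 2 → ℝ) (t : ℝ) :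
    Qmat L N κ r n e t = fieldResponse κ (r + t • (Pi.single n e : Fin N → Fin 2 → ℝ)) := by
  ext l m
  obtain rfl | hm := eq_or_ne m n <;> simp [Qmat, fieldResponse, -Matrix.vec2_dotProduct, *]

/-- derivative at t = 0 of the k-th diagonal entry of
(Ψᴴ Q(t) Q(t)ᴴ Ψ)⁻¹ equals q̃_nᴴ Diag(ξ_k) Λᵉ Diag(ξ_k)ᴴ q̃_n,
where ξ_k is the k-th column of Ψ C_H⁻¹. -/
theorem stmt7 (L N K : ℕ) (κ : Fin L → Fin 2 → ℝ) (r : Fin N → Fin 2 → ℝ)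
    (n : Fin N) (e : Fin 2 → ℝ) (Ψ : Matrix (Fin L) (Fin K) ℂ)
    (hCH : IsUnit (Ψᴴ * (Qmat L N κ r n e 0 * (Qmat L N κ r n e 0)ᴴ) * Ψ)) :
    ∀ k : Fin K,
      HasDerivAt
        (fun t : ℝ => ((Ψᴴ * (Qmat L N κ r n e t * (Qmat L N κ r n e t)ᴴ) * Ψ)⁻¹) k k)
        (star (fun l => Qmat L N κ r n e 0 l n) ⬝ᵥ
          ((Matrix.diagonal
              (fun l => (Ψ * (Ψᴴ * (Qmat L N κ r n e 0 * (Qmat L N κ r n e 0)ᴴ) * Ψ)⁻¹) l k) *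
            Matrix.of (fun i l : Fin L => Complex.I * (((κ i - κ l) ⬝ᵥ e : ℝ) : ℂ)) *
            (Matrix.diagonal
              (fun l => (Ψ * (Ψᴴ * (Qmat L N κ r n e 0 * (Qmat L N κ r n e 0)ᴴ) * Ψ)⁻¹) l k))ᴴ) *ᵥ
            (fun l => Qmat L N κ r n e 0 l n))) 0 := by
  intro k
  have hr : HasDerivAt (fun t : ℝ ↦ r + t • (Pi.single n e : Fin N → Fin 2 → ℝ))
      (Pi.single n e) 0 := by
    simpa using ((hasDerivAt_id (0 : ℝ)).smul_const (Pi.single n e)).const_add r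
  simp only [Qmat_eq_fieldResponse] at hCH ⊢
  exact (stmt7_general κ hr Ψ hCH k).congr_deriv (sum_star_dotProduct_phaseRate_single ..)
end

section
/- Fix an index n, a direction e ∈ ℝ², and Ψ ∈ ℂ^{L×K}. Suppose C_H = Ψ^H Q Q^H Ψ is Hermitian positive definite, let c(t) ∈ ℝ^K be the vector of (real, positive) diagonal entries of (Ψ^H Q(t) Q(t)^H Ψ)^{-1} for t near 0, and assume ν(c(0)) ≠ σ² c_k(0) for every k (the boundary set I_0(c(0)) is empty). Then the function t ↦ R(c(t)) is differentiable at t = 0 with derivative −(1/(ν ln 2)) · q̃_n^H (F ⊙ Λ^e) q̃_n, where ν = ν(c(0)), p = p(c(0)), F = Ψ C_H^{-1} Diag(p) C_H^{-1} Ψ^H, and ⊙ denotes the Hadamard (entrywise) product of matrices. -/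
open Matrix
open scoped ComplexOrder

/-!
Away from the boundary users the active set `A = {k | σ² c_k < ν}` is locally constant, so
`|A| ν = P_T + σ² ∑_A c_k` makes `ν` locally affine in `c`, and `R = ∑_A log₂ (ν / (σ² c_k))`.
Since `|A| dν = σ² ∑_A dc_k`,
`ln 2 · dR = ∑_A (dν / ν - dc_k / c_k) = -(1 / ν) ∑_A (ν / c_k - σ²) dc_k = -(1 / ν) ∑_k p_k dc_k`.
On the channel side `d(Q Qᴴ) = Λ^e ⊙ q̃_n q̃_nᴴ`, because only the `n`-th column moves, and
`dc_k` is the `k`-th diagonal entry of `-C⁻¹ Ψᴴ d(Q Qᴴ) Ψ C⁻¹`. Hence `∑_k p_k dc_k` is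
`-tr (F (Λ^e ⊙ q̃_n q̃_nᴴ))`, which equals `q̃_nᴴ (F ⊙ Λ^e) q̃_n` as `Λ^e` is skew-symmetric.
-/

open Filter
open scoped Topology

section Threshold

variable {ι : Type*} [Fintype ι] {a : ι → ℝ} {x y P : ℝ}

lemma sum_max_sub_lt_sum_max_sub (hx : 0 < ∑ k, max (x - a k) 0) (hxy : x < y) :
    ∑ k, max (x - a k) 0 < ∑ k, max (y - a k) 0 := by
  obtain ⟨k, -, hk⟩ : ∃ k ∈ Finset.univ, 0 < max (x - a k) 0 :=
    Finset.exists_lt_of_sum_lt (by simpa using hx)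
  refine Finset.sum_lt_sum (fun i _ => by gcongr) ⟨k, Finset.mem_univ k, ?_⟩
  have hak : a k < x := by simpa using hk
  exact max_lt (lt_max_of_lt_left (by linarith)) (lt_max_of_lt_left (by linarith))

lemma eq_of_sum_max_sub_eq (hP : 0 < P) (hx : ∑ k, max (x - a k) 0 = P)
    (hy : ∑ k, max (y - a k) 0 = P) : x = y := by
  rcases lt_trichotomy x y with hxy | hxy | hyx
  · exact absurd (hx.trans hy.symm) (sum_max_sub_lt_sum_max_sub (hx ▸ hP) hxy).ne
  · exact hxy
  · exact absurd (hy.trans hx.symm) (sum_max_sub_lt_sum_max_sub (hy ▸ hP) hyx).ne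

lemma exists_pos_sum_max_sub_eq [Nonempty ι] (ha : ∀ k, 0 ≤ a k) (hP : 0 < P) :
    ∃ x, 0 < x ∧ ∑ k, max (x - a k) 0 = P := by
  have h_zero : ∑ k, max (0 - a k) 0 = 0 :=
    Finset.sum_eq_zero fun k _ => max_eq_right (by linarith [ha k])
  obtain ⟨k₀⟩ := ‹Nonempty ι›
  have h_large : P ≤ ∑ k, max (P + a k₀ - a k) 0 :=
    calc P ≤ max (P + a k₀ - a k₀) 0 := by simp
      _ ≤ ∑ k, max (P + a k₀ - a k) 0 :=
        Finset.single_le_sum (f := fun k => max (P + a k₀ - a k) 0)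
          (fun _ _ => le_max_right _ _) (Finset.mem_univ k₀)
  have h_cont : Continuous fun x => ∑ k, max (x - a k) 0 := by fun_prop
  obtain ⟨x, hx, hxP⟩ := intermediate_value_Icc (add_nonneg hP.le (ha k₀)) h_cont.continuousOn
    ⟨h_zero.trans_le hP.le, h_large⟩
  refine ⟨x, hx.1.lt_of_ne ?_, hxP⟩
  rintro rfl
  exact hP.ne (h_zero.symm.trans hxP)

lemma sum_max_sub_eq_card_mul_sub {s : Finset ι} (h_mem : ∀ k ∈ s, a k ≤ x)
    (h_notMem : ∀ k ∉ s, x ≤ a k) :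
    ∑ k, max (x - a k) 0 = s.card * x - ∑ k ∈ s, a k := by
  calc ∑ k, max (x - a k) 0 = ∑ k ∈ s, max (x - a k) 0 :=
        (Finset.sum_subset s.subset_univ fun k _ hk =>
          max_eq_right (sub_nonpos.2 (h_notMem k hk))).symm
    _ = ∑ k ∈ s, (x - a k) :=
        Finset.sum_congr rfl fun k hk => max_eq_left (sub_nonneg.2 (h_mem k hk))
    _ = s.card * x - ∑ k ∈ s, a k := by simp

end Threshold

lemma eventually_forall_pos {ι : Type*} [Finite ι] {a : ι → ℝ} (ha : ∀ k, 0 < a k) :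
    ∀ᶠ b in 𝓝 a, ∀ k, 0 < b k :=
  eventually_all.2 fun k => (continuous_apply k).continuousAt.eventually_const_lt (ha k)

section WaterFilling

variable {K : ℕ} {σ2 PT : ℝ} {c : Fin K → ℝ}

/-- The users k with ν(c) > σ² c_k: for positive c, those receiving positive power. The boundary
users with ν(c) = σ² c_k are excluded. -/
noncomputable def activeSet (K : ℕ) (σ2 PT : ℝ) (c : Fin K → ℝ) : Finset (Fin K) :=
  {k | σ2 * c k < waterLevel K σ2 PT c}

lemma mem_activeSet {k : Fin K} : k ∈ activeSet K σ2 PT c ↔ σ2 * c k < waterLevel K σ2 PT c := by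
  simp [activeSet]

lemma notMem_activeSet {k : Fin K} :
    k ∉ activeSet K σ2 PT c ↔ waterLevel K σ2 PT c ≤ σ2 * c k := by
  rw [mem_activeSet, not_lt]

lemma wfPower_of_mem_activeSet {k : Fin K} (hck : 0 < c k) (hk : k ∈ activeSet K σ2 PT c) :
    wfPower K σ2 PT c k = waterLevel K σ2 PT c / c k - σ2 :=
  max_eq_left (sub_nonneg.2 ((le_div_iff₀ hck).2 (mem_activeSet.1 hk).le))

lemma wfPower_of_notMem_activeSet {k : Fin K} (hck : 0 < c k) (hk : k ∉ activeSet K σ2 PT c) :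
    wfPower K σ2 PT c k = 0 :=
  max_eq_right (sub_nonpos.2 ((div_le_iff₀ hck).2 (notMem_activeSet.1 hk)))

lemma sum_wfPower_mul (hc : ∀ k, 0 < c k) (v : Fin K → ℝ) :
    ∑ k, wfPower K σ2 PT c k * v k =
      waterLevel K σ2 PT c * ∑ k ∈ activeSet K σ2 PT c, (c k)⁻¹ * v k -
        σ2 * ∑ k ∈ activeSet K σ2 PT c, v k := by
  rw [← Finset.sum_subset (activeSet K σ2 PT c).subset_univ fun k _ hk => by
    simp [wfPower_of_notMem_activeSet (hc k) hk], Finset.mul_sum, Finset.mul_sum,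
    ← Finset.sum_sub_distrib]
  refine Finset.sum_congr rfl fun k hk => ?_
  rw [wfPower_of_mem_activeSet (hc k) hk]
  ring

lemma sumRate_eq_sum_activeSet (hσ2 : 0 < σ2) (hc : ∀ k, 0 < c k) :
    sumRate K σ2 PT c = ∑ k ∈ activeSet K σ2 PT c,
      (Real.log (waterLevel K σ2 PT c) - Real.log σ2 - Real.log (c k)) / Real.log 2 := by
  rw [sumRate, ← Finset.sum_subset (activeSet K σ2 PT c).subset_univ fun k _ hk => by
    simp [wfPower_of_notMem_activeSet (hc k) hk]]
  refine Finset.sum_congr rfl fun k hk => ?_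
  have hck := hc k
  have hν : 0 < waterLevel K σ2 PT c := (mul_pos hσ2 hck).trans (mem_activeSet.1 hk)
  rw [wfPower_of_mem_activeSet hck hk, Real.logb, ← Real.log_div hν.ne' hσ2.ne',
    ← Real.log_div (by positivity) hck.ne']
  congr 2
  field_simp
  ring

variable [NeZero K]

lemma waterLevel_spec (hσ2 : 0 < σ2) (hPT : 0 < PT) (hc : ∀ k, 0 < c k) :
    0 < waterLevel K σ2 PT c ∧ ∑ k, max (waterLevel K σ2 PT c - σ2 * c k) 0 = PT := by
  have h := exists_pos_sum_max_sub_eq (fun k => (mul_pos hσ2 (hc k)).le) hPT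
  rw [waterLevel, dif_pos h]
  exact h.choose_spec

lemma waterLevel_eq_of_sum_eq (hσ2 : 0 < σ2) (hPT : 0 < PT) (hc : ∀ k, 0 < c k) {x : ℝ}
    (hx : ∑ k, max (x - σ2 * c k) 0 = PT) : waterLevel K σ2 PT c = x :=
  eq_of_sum_max_sub_eq hPT (waterLevel_spec hσ2 hPT hc).2 hx

lemma card_activeSet_mul_waterLevel (hσ2 : 0 < σ2) (hPT : 0 < PT) (hc : ∀ k, 0 < c k) :
    (activeSet K σ2 PT c).card * waterLevel K σ2 PT c =
      PT + σ2 * ∑ k ∈ activeSet K σ2 PT c, c k := by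
  have h_sum := (waterLevel_spec hσ2 hPT hc).2
  rw [sum_max_sub_eq_card_mul_sub (fun k hk => (mem_activeSet.1 hk).le)
    (fun k hk => notMem_activeSet.1 hk), ← Finset.mul_sum] at h_sum
  linarith

lemma card_activeSet_pos (hσ2 : 0 < σ2) (hPT : 0 < PT) (hc : ∀ k, 0 < c k) :
    (0 : ℝ) < (activeSet K σ2 PT c).card := by
  have h_sum : 0 ≤ ∑ k ∈ activeSet K σ2 PT c, c k := Finset.sum_nonneg fun k _ => (hc k).le
  have h_mul : 0 < (activeSet K σ2 PT c).card * waterLevel K σ2 PT c := by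
    rw [card_activeSet_mul_waterLevel hσ2 hPT hc]
    positivity
  exact pos_of_mul_pos_left h_mul (waterLevel_spec hσ2 hPT hc).1.le

lemma eventually_waterLevel_eq (hσ2 : 0 < σ2) (hPT : 0 < PT) (hc : ∀ k, 0 < c k)
    (hI0 : ∀ k, waterLevel K σ2 PT c ≠ σ2 * c k) :
    ∀ᶠ c' in 𝓝 c, waterLevel K σ2 PT c' =
      (PT + σ2 * ∑ k ∈ activeSet K σ2 PT c, c' k) / (activeSet K σ2 PT c).card := by
  set A := activeSet K σ2 PT c
  have hA : (0 : ℝ) < A.card := card_activeSet_pos hσ2 hPT hc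
  let w : (Fin K → ℝ) → ℝ := fun c' => (PT + σ2 * ∑ k ∈ A, c' k) / A.card
  have hw : Continuous w := by fun_prop
  have hwc : w c = waterLevel K σ2 PT c := by
    rw [div_eq_iff hA.ne', ← card_activeSet_mul_waterLevel hσ2 hPT hc, mul_comm]
  have h_cost : ∀ k, Continuous fun c' : Fin K → ℝ => σ2 * c' k := fun k => by fun_prop
  have h_mem : ∀ᶠ c' in 𝓝 c, ∀ k ∈ A, σ2 * c' k < w c' :=
    (Finset.eventually_all A).2 fun k hk =>
      (h_cost k).continuousAt.eventually_lt hw.continuousAt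
        (hwc ▸ mem_activeSet.1 hk)
  have h_notMem : ∀ᶠ c' in 𝓝 c, ∀ k, k ∉ A → w c' < σ2 * c' k :=
    eventually_all.2 fun k => eventually_imp_distrib_left.2 fun hk =>
      hw.continuousAt.eventually_lt (h_cost k).continuousAt
        (hwc ▸ (notMem_activeSet.1 hk).lt_of_ne (hI0 k))
  filter_upwards [eventually_forall_pos hc, h_mem, h_notMem] with c' h_pos h_mem h_notMem
  refine waterLevel_eq_of_sum_eq hσ2 hPT h_pos ?_
  rw [sum_max_sub_eq_card_mul_sub (fun k hk => (h_mem k hk).le) (fun k hk => (h_notMem k hk).le),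
    ← Finset.mul_sum]
  simp only [w]
  field_simp
  ring

lemma hasFDerivAt_waterLevel (hσ2 : 0 < σ2) (hPT : 0 < PT) (hc : ∀ k, 0 < c k)
    (hI0 : ∀ k, waterLevel K σ2 PT c ≠ σ2 * c k) :
    HasFDerivAt (waterLevel K σ2 PT)
      ((σ2 / (activeSet K σ2 PT c).card) •
        ∑ k ∈ activeSet K σ2 PT c, ContinuousLinearMap.proj (R := ℝ) k) c := by
  set A := activeSet K σ2 PT c
  have h_affine : HasFDerivAt (fun c' : Fin K → ℝ => PT / A.card + σ2 / A.card * ∑ k ∈ A, c' k)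
      ((σ2 / A.card) • ∑ k ∈ A, ContinuousLinearMap.proj (R := ℝ) k) c :=
    ((HasFDerivAt.fun_sum fun k _ => hasFDerivAt_apply k c).const_mul _).const_add _
  refine h_affine.congr_of_eventuallyEq ?_
  filter_upwards [eventually_waterLevel_eq hσ2 hPT hc hI0] with c' hc'
  rw [hc']
  ring

lemma eventually_activeSet_eq (hσ2 : 0 < σ2) (hPT : 0 < PT) (hc : ∀ k, 0 < c k)
    (hI0 : ∀ k, waterLevel K σ2 PT c ≠ σ2 * c k) :
    ∀ᶠ c' in 𝓝 c, activeSet K σ2 PT c' = activeSet K σ2 PT c := by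
  have h_cont := (hasFDerivAt_waterLevel hσ2 hPT hc hI0).continuousAt
  simp only [Finset.ext_iff, mem_activeSet]
  refine eventually_all.2 fun k => ?_
  have h_cost : ContinuousAt (fun c' : Fin K → ℝ => σ2 * c' k) c :=
    Continuous.continuousAt (by fun_prop)
  rcases (hI0 k).lt_or_gt with hk | hk
  · filter_upwards [h_cont.eventually_lt h_cost hk] with c' hc'
    exact iff_of_false hc'.not_gt hk.not_gt
  · filter_upwards [h_cost.eventually_lt h_cont hk] with c' hc'
    exact iff_of_true hc' hk

lemma hasFDerivAt_sumRate (hσ2 : 0 < σ2) (hPT : 0 < PT) (hc : ∀ k, 0 < c k)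
    (hI0 : ∀ k, waterLevel K σ2 PT c ≠ σ2 * c k) :
    HasFDerivAt (sumRate K σ2 PT)
      (-(1 / (waterLevel K σ2 PT c * Real.log 2)) •
        ∑ k, wfPower K σ2 PT c k • ContinuousLinearMap.proj (R := ℝ) k) c := by
  have hA := card_activeSet_pos hσ2 hPT hc
  have hν := (waterLevel_spec hσ2 hPT hc).1
  have h_level := hasFDerivAt_waterLevel hσ2 hPT hc hI0
  have h_sum := HasFDerivAt.fun_sum (u := activeSet K σ2 PT c) fun k _ =>
    (((h_level.log hν.ne').sub_const (Real.log σ2)).sub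
      ((hasFDerivAt_apply (𝕜 := ℝ) k c).log (hc k).ne')).mul_const (Real.log 2)⁻¹
  refine (h_sum.congr_of_eventuallyEq ?_).congr_fderiv ?_
  · filter_upwards [eventually_forall_pos hc, eventually_activeSet_eq hσ2 hPT hc hI0]
      with c' h_pos h_active
    rw [sumRate_eq_sum_activeSet hσ2 h_pos, h_active]
    rfl
  · refine ContinuousLinearMap.ext fun v => ?_
    simp only [_root_.sum_apply, _root_.smul_apply, _root_.sub_apply,
      ContinuousLinearMap.proj_apply, smul_eq_mul, sum_wfPower_mul hc, ← Finset.mul_sum,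
      Finset.sum_sub_distrib, Finset.sum_const, nsmul_eq_mul]
    field_simp
    ring

end WaterFilling

section MatrixCalculus

variable {𝕜 : Type*} [RCLike 𝕜] {l m n : Type*} {t : ℝ}

open scoped Matrix.Norms.Operator

lemma hasDerivAt_matrix [Finite n] {M : ℝ → Matrix m n 𝕜} {M' : Matrix m n 𝕜} :
    HasDerivAt M M' t ↔ ∀ i j, HasDerivAt (fun s => M s i j) (M' i j) t :=
  have := Fintype.ofFinite n
  hasDerivAt_pi.trans (forall_congr' fun _ => hasDerivAt_pi)

lemma hasDerivAt_matrix_mul_s8 [Fintype m] [Finite n] {M : ℝ → Matrix l m 𝕜}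
    {N : ℝ → Matrix m n 𝕜} {M' : Matrix l m 𝕜} {N' : Matrix m n 𝕜}
    (hM : HasDerivAt M M' t) (hN : HasDerivAt N N' t) :
    HasDerivAt (fun s => M s * N s) (M' * N t + M t * N') t := by
  refine hasDerivAt_matrix.2 fun i j => ?_
  simp only [mul_apply, Matrix.add_apply, ← Finset.sum_add_distrib]
  exact HasDerivAt.fun_sum fun k _ =>
    (hasDerivAt_matrix.1 hM i k).fun_mul (hasDerivAt_matrix.1 hN k j)

lemma hasDerivAt_matrix_conjTranspose_s8 [Finite m] [Finite n] {M : ℝ → Matrix m n 𝕜}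
    {M' : Matrix m n 𝕜} (hM : HasDerivAt M M' t) :
    HasDerivAt (fun s => (M s)ᴴ) M'ᴴ t :=
  hasDerivAt_matrix.2 fun i j => (hasDerivAt_matrix.1 hM j i).star

lemma hasDerivAt_matrix_inv_s8 [Fintype n] [DecidableEq n] {M : ℝ → Matrix n n 𝕜} {M' : Matrix n n 𝕜}
    (hM : HasDerivAt M M' t) (ht : IsUnit (M t)) :
    HasDerivAt (fun s => (M s)⁻¹) (-((M t)⁻¹ * M' * (M t)⁻¹)) t := by
  have : CompleteSpace (Matrix n n 𝕜) := inferInstanceAs (CompleteSpace (n → n → 𝕜))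
  obtain ⟨u, hu⟩ := ht
  simp only [nonsing_inv_eq_ringInverse]
  have h_inv := hasFDerivAt_ringInverse (𝕜 := ℝ) u
  rw [hu] at h_inv
  simpa [← hu] using! h_inv.comp_hasDerivAt t hM

lemma hasDerivAt_inv_mul_mul [Fintype m] [Fintype n] [DecidableEq n]
    (U : Matrix n m 𝕜) (V : Matrix m n 𝕜) {G : ℝ → Matrix m m 𝕜} {G' : Matrix m m 𝕜}
    (hG : HasDerivAt G G' t) (ht : IsUnit (U * G t * V)) :
    HasDerivAt (fun s => (U * G s * V)⁻¹)
      (-((U * G t * V)⁻¹ * (U * G' * V) * (U * G t * V)⁻¹)) t := by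
  have h_mul := hasDerivAt_matrix_mul_s8 (hasDerivAt_matrix_mul_s8 (hasDerivAt_const t U) hG)
    (hasDerivAt_const t V)
  simp only [Matrix.zero_mul, Matrix.mul_zero, zero_add, add_zero] at h_mul
  exact hasDerivAt_matrix_inv_s8 h_mul ht

end MatrixCalculus

lemma exists_hasDerivAt_of_hasDerivAt_ofReal {f : ℝ → ℝ} {z : ℂ} {t : ℝ}
    (hf : HasDerivAt (fun s => (f s : ℂ)) z t) : ∃ d : ℝ, HasDerivAt f d t ∧ (d : ℂ) = z := by
  have h_re : HasDerivAt f z.re t := Complex.reCLM.hasFDerivAt.comp_hasDerivAt t hf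
  exact ⟨z.re, h_re, h_re.ofReal_comp.unique hf⟩

section HadamardTrace

variable {α l m : Type*} [CommRing α] [Fintype l] [Fintype m]

lemma trace_mul_hadamard_vecMulVec (F Λ : Matrix m m α) (u v : m → α) :
    trace (F * (Λ ⊙ vecMulVec u v)) = v ⬝ᵥ ((F ⊙ Λᵀ) *ᵥ u) := by
  simp only [trace, diag_apply, mul_apply, hadamard_apply, vecMulVec_apply, dotProduct, mulVec,
    transpose_apply, Finset.mul_sum]
  exact Finset.sum_congr rfl fun _ _ => Finset.sum_congr rfl fun _ _ => by ring

lemma sum_mul_neg_conj_apply_self [DecidableEq l] (p : l → α) (B : Matrix l l α)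
    (U : Matrix l m α) (V : Matrix m l α) (G : Matrix m m α) :
    ∑ k, p k * (-(B * (U * G * V) * B)) k k = -trace (V * B * diagonal p * B * U * G) := by
  calc ∑ k, p k * (-(B * (U * G * V) * B)) k k
      = -trace (diagonal p * (B * (U * G * V) * B)) := by simp [trace, diagonal_mul]
    _ = -trace ((diagonal p * B * U * G) * (V * B)) := by simp only [Matrix.mul_assoc]
    _ = -trace (V * B * diagonal p * B * U * G) := by
      rw [trace_mul_comm]; simp only [Matrix.mul_assoc]

lemma sum_mul_neg_conj_hadamard_apply_self [DecidableEq l] (p : l → α) (B : Matrix l l α)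
    (U : Matrix l m α) (V : Matrix m l α) {Λ : Matrix m m α} (hΛ : Λᵀ = -Λ) (u v : m → α) :
    ∑ k, p k * (-(B * (U * (Λ ⊙ vecMulVec u v) * V) * B)) k k =
      v ⬝ᵥ (((V * B * diagonal p * B * U) ⊙ Λ) *ᵥ u) := by
  have h_neg (F : Matrix m m α) : F ⊙ (-Λ) = -(F ⊙ Λ) := by ext; simp
  rw [sum_mul_neg_conj_apply_self, trace_mul_hadamard_vecMulVec, hΛ, h_neg, neg_mulVec,
    dotProduct_neg, neg_neg]

end HadamardTrace

section FieldResponse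

/-- The matrix Λ^e of phase-rate differences between pairs of paths: moving one antenna
along e makes its contribution q̃ q̃ᴴ to Q Qᴴ evolve with derivative Λ^e ⊙ q̃ q̃ᴴ. -/
noncomputable def phaseRateDiff {l d : Type*} [Fintype d] (κ : l → d → ℝ) (e : d → ℝ) :
    Matrix l l ℂ :=
  of fun i j => Complex.I * (((κ i - κ j) ⬝ᵥ e : ℝ) : ℂ)

lemma transpose_phaseRateDiff {l d : Type*} [Fintype d] (κ : l → d → ℝ) (e : d → ℝ) :
    (phaseRateDiff κ e)ᵀ = -phaseRateDiff κ e := by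
  ext i j
  simp only [phaseRateDiff, transpose_apply, Matrix.neg_apply, of_apply, ← neg_sub (κ i) (κ j),
    neg_dotProduct, Complex.ofReal_neg, mul_neg]

variable {L N : ℕ} (κ : Fin L → Fin 2 → ℝ) (r : Fin N → Fin 2 → ℝ) (n : Fin N) (e : Fin 2 → ℝ)
  (t : ℝ)

open scoped Matrix.Norms.Operator

lemma hasDerivAt_Qmat :
    HasDerivAt (Qmat L N κ r n e)
      (vecMulVec (fun l => Complex.I * ((κ l ⬝ᵥ e : ℝ) : ℂ) * Qmat L N κ r n e t l n)
        (Pi.single n 1)) t := by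
  refine hasDerivAt_matrix.2 fun l m => ?_
  rcases eq_or_ne m n with rfl | hm
  · have h_phase : HasDerivAt (fun s : ℝ => κ l ⬝ᵥ (r m + s • e)) (κ l ⬝ᵥ e) t := by
      simp only [dotProduct_add, dotProduct_smul, smul_eq_mul]
      simpa using ((hasDerivAt_id t).mul_const (κ l ⬝ᵥ e)).const_add (κ l ⬝ᵥ r m)
    simp only [Qmat, of_apply, if_true, vecMulVec_apply, Pi.single_eq_same, mul_one]
    exact (h_phase.ofReal_comp.const_mul Complex.I).cexp.congr_deriv (mul_comm _ _)
  · simpa [Qmat, vecMulVec_apply, hm] using hasDerivAt_const t _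

lemma hasDerivAt_Qmat_mul_conjTranspose :
    HasDerivAt (fun s => Qmat L N κ r n e s * (Qmat L N κ r n e s)ᴴ)
      (phaseRateDiff κ e ⊙
        vecMulVec (fun l => Qmat L N κ r n e t l n) (star fun l => Qmat L N κ r n e t l n)) t := by
  have hQ := hasDerivAt_Qmat κ r n e t
  refine (hasDerivAt_matrix_mul_s8 hQ (hasDerivAt_matrix_conjTranspose_s8 hQ)).congr_deriv ?_
  ext i j
  simp only [vecMulVec_mul, mul_vecMulVec, conjTranspose_vecMulVec, single_vecMul, mulVec_single,
    one_smul, MulOpposite.op_one, Pi.star_single, star_one, Matrix.add_apply, hadamard_apply,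
    vecMulVec_apply, row_apply, col_apply, conjTranspose_apply, Pi.star_apply, star_mul',
    RCLike.star_def, Complex.conj_I, Complex.conj_ofReal, phaseRateDiff, of_apply, sub_dotProduct,
    Complex.ofReal_sub]
  ring

end FieldResponse

/-- with C_H = Ψᴴ Q Qᴴ Ψ Hermitian positive definite, c(t) the (real,
positive) diagonal of (Ψᴴ Q(t) Q(t)ᴴ Ψ)⁻¹ near t = 0, and no boundary users
(ν(c(0)) ≠ σ² c_k(0) for all k), the map t ↦ R(c(t)) is differentiable at 0
with derivative −(1/(ν ln 2)) · q̃_nᴴ (F ⊙ Λᵉ) q̃_n, where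
F = Ψ C_H⁻¹ Diag(p) C_H⁻¹ Ψᴴ, ν = ν(c(0)), p = p(c(0)). -/
theorem stmt8 (K : ℕ) (hK : 1 ≤ K) (σ2 PT : ℝ) (hσ2 : 0 < σ2) (hPT : 0 < PT)
    (L N : ℕ) (κ : Fin L → Fin 2 → ℝ) (r : Fin N → Fin 2 → ℝ)
    (n : Fin N) (e : Fin 2 → ℝ) (Ψ : Matrix (Fin L) (Fin K) ℂ)
    (hPD : (Ψᴴ * (Qmat L N κ r n e 0 * (Qmat L N κ r n e 0)ᴴ) * Ψ).PosDef)
    (c : ℝ → Fin K → ℝ)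
    (hc : ∀ᶠ t in nhds (0 : ℝ), ∀ k : Fin K,
      0 < c t k ∧
        ((Ψᴴ * (Qmat L N κ r n e t * (Qmat L N κ r n e t)ᴴ) * Ψ)⁻¹) k k = ((c t k : ℝ) : ℂ))
    (hI0 : ∀ k : Fin K, waterLevel K σ2 PT (c 0) ≠ σ2 * c 0 k) :
    ∃ d : ℝ,
      HasDerivAt (fun t : ℝ => sumRate K σ2 PT (c t)) d 0 ∧
      (d : ℂ) =
        -(1 / (((waterLevel K σ2 PT (c 0) : ℝ) : ℂ) * ((Real.log 2 : ℝ) : ℂ))) *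
          (star (fun l => Qmat L N κ r n e 0 l n) ⬝ᵥ
            ((Matrix.hadamard
                (Ψ * (Ψᴴ * (Qmat L N κ r n e 0 * (Qmat L N κ r n e 0)ᴴ) * Ψ)⁻¹ *
                  Matrix.diagonal (fun k => ((wfPower K σ2 PT (c 0) k : ℝ) : ℂ)) *
                  (Ψᴴ * (Qmat L N κ r n e 0 * (Qmat L N κ r n e 0)ᴴ) * Ψ)⁻¹ * Ψᴴ)
                (Matrix.of (fun i l : Fin L => Complex.I * (((κ i - κ l) ⬝ᵥ e : ℝ) : ℂ)))) *ᵥ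
              (fun l => Qmat L N κ r n e 0 l n))) := by
  have : NeZero K := ⟨by omega⟩
  have h_inv := hasDerivAt_inv_mul_mul Ψᴴ Ψ
    (hasDerivAt_Qmat_mul_conjTranspose κ r n e 0) hPD.isUnit
  choose c' hc' hc'_eq using fun k => exists_hasDerivAt_of_hasDerivAt_ofReal <|
    (hasDerivAt_matrix.1 h_inv k k).congr_of_eventuallyEq (hc.mono fun t ht => (ht k).2.symm)
  have h_rate := hasFDerivAt_sumRate hσ2 hPT (fun k => (hc.self_of_nhds k).1) hI0
  refine ⟨_, h_rate.comp_hasDerivAt 0 (hasDerivAt_pi.2 hc'), ?_⟩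
  simp only [_root_.smul_apply, _root_.sum_apply, ContinuousLinearMap.proj_apply, smul_eq_mul]
  push_cast
  simp only [hc'_eq]
  rw [sum_mul_neg_conj_hadamard_apply_self _ _ _ _ (transpose_phaseRateDiff κ e)]
  rfl
end

section
/- Let Q ∈ ℂ^{L×N}, let b_1, …, b_K ∈ ℝ^L have nonnegative entries, set G_i = Q^H Diag(b_i) Q, fix k ∈ {1,…,K}, and for ε ∈ ℝ^K define Y_k(ε) = I_N + Σ_{i≠k} ε_i G_i, D_k(ε) = Q Y_k(ε)^{-1} Q^H, and g_{k,l}(ε) = tr(ε_l G_l Y_k(ε)^{-1}) − 1. Let ε ∈ ℝ^K have nonnegative entries (so Y_k(ε) is Hermitian positive definite and invertible). Then each g_{k,l} is partially differentiable at ε in every coordinate, with ∂g_{k,l}/∂ε_k (ε) = 𝟙{l = k} · b_l^T diag(D_k(ε)), and for every i ≠ k, ∂g_{k,l}/∂ε_i (ε) = 𝟙{l = i} · b_l^T diag(D_k(ε)) − ε_l · b_i^T (D_k(ε) ⊙ D_k(ε)^T) b_l. -/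
/-!
Every coordinate derivative of `Y_k` is constant: `G_i` if `i ≠ k`, and `0` if `i = k`. Hence
`∂(Y_k⁻¹) = -Y_k⁻¹ (∂Y_k) Y_k⁻¹`, and the product rule for `ε_l • tr(G_l Y_k⁻¹)` leaves the traces
`tr(G_l Y_k⁻¹)` and `tr(G_l Y_k⁻¹ G_i Y_k⁻¹)`. Cycling the outer factor `Qᴴ` of `G_l` to the end
turns them into `tr(Diag(b_l) D_k) = b_lᵀ diag(D_k)` and
`tr(Diag(b_l) D_k Diag(b_i) D_k) = b_iᵀ (D_k ⊙ D_kᵀ) b_l`.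
-/

open Matrix
open scoped ComplexOrder

/-- G_i = Qᴴ Diag(b_i) Q. -/
noncomputable def Gmat (L N K : ℕ) (Q : Matrix (Fin L) (Fin N) ℂ)
    (b : Fin K → Fin L → ℝ) (i : Fin K) : Matrix (Fin N) (Fin N) ℂ :=
  Qᴴ * Matrix.diagonal (fun l => (b i l : ℂ)) * Q

/-- Y_k(ε) = I_N + Σ_{i≠k} ε_i G_i. -/
noncomputable def Ymat (L N K : ℕ) (Q : Matrix (Fin L) (Fin N) ℂ)
    (b : Fin K → Fin L → ℝ) (k : Fin K) (ε : Fin K → ℝ) : Matrix (Fin N) (Fin N) ℂ :=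
  1 + ∑ i ∈ Finset.univ.erase k, ε i • Gmat L N K Q b i

/-- D_k(ε) = Q Y_k(ε)⁻¹ Qᴴ. -/
noncomputable def Dmat (L N K : ℕ) (Q : Matrix (Fin L) (Fin N) ℂ)
    (b : Fin K → Fin L → ℝ) (k : Fin K) (ε : Fin K → ℝ) : Matrix (Fin L) (Fin L) ℂ :=
  Q * (Ymat L N K Q b k ε)⁻¹ * Qᴴ

/-- g_{k,l}(ε) = tr(ε_l G_l Y_k(ε)⁻¹) − 1. -/
noncomputable def gfun (L N K : ℕ) (Q : Matrix (Fin L) (Fin N) ℂ)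
    (b : Fin K → Fin L → ℝ) (k l : Fin K) (ε : Fin K → ℝ) : ℂ :=
  Matrix.trace (ε l • Gmat L N K Q b l * (Ymat L N K Q b k ε)⁻¹) - 1

section Derivatives

variable {𝕜 : Type*} [NontriviallyNormedField 𝕜] {x : 𝕜}

theorem hasDerivAt_ringInverse {R : Type*} [NormedRing R] [HasSummableGeomSeries R]
    [NormedAlgebra 𝕜 R] {f : 𝕜 → R} {f' : R} (hf : HasDerivAt f f' x) (hx : IsUnit (f x)) :
    HasDerivAt (fun t => Ring.inverse (f t))
      (-(Ring.inverse (f x) * f' * Ring.inverse (f x))) x := by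
  obtain ⟨u, hu⟩ := hx
  have hinv := (hasFDerivAt_ringInverse (𝕜 := 𝕜) u).comp_hasDerivAt_of_eq x hf hu
  simpa [← hu] using! hinv

theorem hasDerivAt_update_apply {ι : Type*} [DecidableEq ι] (a : ι → 𝕜) (i j : ι) :
    HasDerivAt (fun t => Function.update a i t j) (if j = i then 1 else 0) x := by
  simpa only [Pi.single_apply] using hasDerivAt_pi.1 (hasDerivAt_update a i x) j

theorem hasDerivAt_sum_update_smul {ι F : Type*} [DecidableEq ι] [NormedAddCommGroup F]
    [NormedSpace 𝕜 F] (s : Finset ι) (v : ι → F) (a : ι → 𝕜) (i : ι) :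
    HasDerivAt (fun t => ∑ j ∈ s, Function.update a i t j • v j) (if i ∈ s then v i else 0) x := by
  refine (HasDerivAt.fun_sum fun j _ =>
    (hasDerivAt_update_apply a i j).smul_const (v j)).congr_deriv ?_
  simp

variable {n R : Type*} [Fintype n]

theorem hasDerivAt_matrix_trace [NormedAddCommGroup R] [NormedSpace 𝕜 R]
    {A : 𝕜 → Matrix n n R} {A' : Matrix n n R} (hA : HasDerivAt A A' x) :
    HasDerivAt (fun t => (A t).trace) A'.trace x :=
  HasDerivAt.fun_sum fun i _ => hasDerivAt_pi.1 (hasDerivAt_pi.1 hA i) i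

variable [DecidableEq n] [NormedCommRing R] [CompleteSpace R] [NormedAlgebra 𝕜 R]
  {Y : 𝕜 → Matrix n n R} {Y' : Matrix n n R}

theorem hasDerivAt_matrix_inv_s12 (hY : HasDerivAt Y Y' x) (hx : IsUnit (Y x)) :
    HasDerivAt (fun t => (Y t)⁻¹) (-((Y x)⁻¹ * Y' * (Y x)⁻¹)) x := by
  open scoped Matrix.Norms.Operator in
  -- Instance search does not identify the uniformity of the operator norm with the entrywise one.
  have : @CompleteSpace (Matrix n n R) PseudoMetricSpace.toUniformSpace :=
    inferInstanceAs (CompleteSpace (n → n → R))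
  simp only [Matrix.nonsing_inv_eq_ringInverse]
  exact hasDerivAt_ringInverse hY hx

theorem hasDerivAt_trace_smul_mul_inv {c : 𝕜 → 𝕜} {c' : 𝕜} (hc : HasDerivAt c c' x)
    (A : Matrix n n R) (hY : HasDerivAt Y Y' x) (hx : IsUnit (Y x)) :
    HasDerivAt (fun t => (c t • A * (Y t)⁻¹).trace)
      (c' • (A * (Y x)⁻¹).trace - c x • (A * ((Y x)⁻¹ * Y' * (Y x)⁻¹)).trace) x := by
  have hprod := open scoped Matrix.Norms.Operator in
    (hc.smul_const A).mul (hasDerivAt_matrix_inv_s12 hY hx)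
  refine (hasDerivAt_matrix_trace hprod).congr_deriv ?_
  simp [sub_eq_add_neg]

end Derivatives

section Trace

variable {m n R : Type*} [Fintype m] [Fintype n] [DecidableEq m] [CommSemiring R]
  (P : Matrix n m R) (Q : Matrix m n R) (v w : m → R) (X Z : Matrix n n R)

theorem trace_mul_diagonal_mul_mul_eq_dotProduct_diag :
    (P * diagonal v * Q * X).trace = v ⬝ᵥ diag (Q * X * P) := by
  rw [Matrix.mul_assoc, trace_mul_comm, ← Matrix.mul_assoc, trace_mul_comm]
  simp [trace, dotProduct, diagonal_mul]

theorem trace_mul_diagonal_mul_mul_eq_dotProduct_hadamard_mulVec :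
    (P * diagonal v * Q * (X * (P * diagonal w * Q) * Z)).trace =
      w ⬝ᵥ ((Q * Z * P) ⊙ (Q * X * P)ᵀ) *ᵥ v := by
  calc (P * diagonal v * Q * (X * (P * diagonal w * Q) * Z)).trace
      = (diagonal v * (Q * X * P) * (diagonal w * (Q * Z * P))).trace := by
        simp only [Matrix.mul_assoc]
        rw [trace_mul_comm]
        simp only [Matrix.mul_assoc]
    _ = (diagonal w * (Q * Z * P) * ((Q * X * P)ᵀ * diagonal v)ᵀ).trace := by
        rw [trace_mul_comm, transpose_mul, transpose_transpose, diagonal_transpose]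
    _ = w ⬝ᵥ ((Q * Z * P) ⊙ (Q * X * P)ᵀ) *ᵥ v := by
        rw [dotProduct_mulVec, dotProduct_vecMul_hadamard]

end Trace

section FixedPoint

variable {L N K : ℕ} (Q : Matrix (Fin L) (Fin N) ℂ) (b : Fin K → Fin L → ℝ) (k : Fin K)
  (ε : Fin K → ℝ)

variable {b} in
theorem posSemidef_Gmat {i : Fin K} (hb : 0 ≤ b i) : (Gmat L N K Q b i).PosSemidef := by
  have hdiag : (diagonal fun j => (b i j : ℂ)).PosSemidef :=
    .diagonal fun j => Complex.zero_le_real.2 (hb j)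
  exact hdiag.conjTranspose_mul_mul_same Q

variable {b k ε} in
theorem posDef_Ymat (hb : ∀ i ≠ k, 0 ≤ b i) (hε : ∀ i ≠ k, 0 ≤ ε i) :
    (Ymat L N K Q b k ε).PosDef := by
  refine PosDef.one.add_posSemidef (posSemidef_sum _ fun i hi => ?_)
  have hik : i ≠ k := Finset.ne_of_mem_erase hi
  exact (posSemidef_Gmat Q (hb i hik)).smul (hε i hik)

theorem hasDerivAt_Ymat_update (i : Fin K) (t : ℝ) :
    HasDerivAt (fun t => Ymat L N K Q b k (Function.update ε i t))
      (if i = k then 0 else Gmat L N K Q b i) t := by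
  open scoped Matrix.Norms.Operator in
  have hsum := hasDerivAt_sum_update_smul (Finset.univ.erase k) (Gmat L N K Q b) ε i (x := t)
  simp only [Finset.mem_erase, Finset.mem_univ, and_true, ite_not] at hsum
  exact hsum.const_add 1

variable {k ε} in
theorem hasDerivAt_gfun_update (hY : IsUnit (Ymat L N K Q b k ε)) (i l : Fin K) :
    HasDerivAt (fun t => gfun L N K Q b k l (Function.update ε i t))
      ((if l = i then (1 : ℂ) else 0) *
          (∑ j, (b l j : ℂ) * Dmat L N K Q b k ε j j) -
        if i = k then 0 else (ε l : ℂ) *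
          ((fun j => (b i j : ℂ)) ⬝ᵥ
            (Dmat L N K Q b k ε ⊙ (Dmat L N K Q b k ε)ᵀ) *ᵥ fun j => (b l j : ℂ))) (ε i) := by
  have htrace := hasDerivAt_trace_smul_mul_inv (hasDerivAt_update_apply ε i l)
    (Gmat L N K Q b l) (hasDerivAt_Ymat_update Q b k ε i (ε i)) (by rwa [Function.update_eq_self])
  refine (htrace.sub_const 1).congr_deriv ?_
  have hfirst : (Gmat L N K Q b l * (Ymat L N K Q b k ε)⁻¹).trace =
      ∑ j, (b l j : ℂ) * Dmat L N K Q b k ε j j :=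
    trace_mul_diagonal_mul_mul_eq_dotProduct_diag ..
  have hsecond : (Gmat L N K Q b l *
      ((Ymat L N K Q b k ε)⁻¹ * Gmat L N K Q b i * (Ymat L N K Q b k ε)⁻¹)).trace =
      (fun j => (b i j : ℂ)) ⬝ᵥ
        (Dmat L N K Q b k ε ⊙ (Dmat L N K Q b k ε)ᵀ) *ᵥ fun j => (b l j : ℂ) :=
    trace_mul_diagonal_mul_mul_eq_dotProduct_hadamard_mulVec ..
  rw [Function.update_eq_self, hfirst]
  split_ifs <;> simp [hsecond]

end FixedPoint

/-- Y_k(ε) is Hermitian positive definite for ε ≥ 0, and the partial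
derivatives of g_{k,l} are
∂g_{k,l}/∂ε_k = 𝟙{l=k}·b_lᵀ diag(D_k), and for i ≠ k,
∂g_{k,l}/∂ε_i = 𝟙{l=i}·b_lᵀ diag(D_k) − ε_l·b_iᵀ (D_k ⊙ D_kᵀ) b_l. -/
theorem stmt12 (L N K : ℕ) (Q : Matrix (Fin L) (Fin N) ℂ)
    (b : Fin K → Fin L → ℝ) (hb : ∀ i l, 0 ≤ b i l)
    (k : Fin K) (ε : Fin K → ℝ) (hε : ∀ i, 0 ≤ ε i) :
    (Ymat L N K Q b k ε).PosDef ∧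
    (∀ l : Fin K,
      HasDerivAt (fun t : ℝ => gfun L N K Q b k l (Function.update ε k t))
        ((if l = k then (1 : ℂ) else 0) *
          ∑ j : Fin L, (b l j : ℂ) * Dmat L N K Q b k ε j j) (ε k)) ∧
    (∀ i : Fin K, i ≠ k → ∀ l : Fin K,
      HasDerivAt (fun t : ℝ => gfun L N K Q b k l (Function.update ε i t))
        ((if l = i then (1 : ℂ) else 0) *
            (∑ j : Fin L, (b l j : ℂ) * Dmat L N K Q b k ε j j) -
          (ε l : ℂ) *
            ((fun j => (b i j : ℂ)) ⬝ᵥ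
              (Matrix.hadamard (Dmat L N K Q b k ε) (Dmat L N K Q b k ε)ᵀ *ᵥ
                fun j => (b l j : ℂ)))) (ε i)) := by
  have hY := posDef_Ymat Q (fun i _ => hb i) fun i (_ : i ≠ k) => hε i
  refine ⟨hY, fun l => ?_, fun i hi l => ?_⟩
  · simpa using hasDerivAt_gfun_update Q b hY.isUnit k l
  · simpa only [if_neg hi] using hasDerivAt_gfun_update Q b hY.isUnit i l
end

section
/- Let G_1, …, G_K ∈ ℂ^{N×N} be Hermitian positive definite matrices and fix k ∈ {1,…,K}. Then there is at most one vector ε ∈ ℝ^K with all entries strictly positive such that for every l ∈ {1,…,K}, ε_l · tr(G_l (I_N + Σ_{i≠k} ε_i G_i)^{-1}) = 1. -/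
open Matrix
open scoped ComplexOrder

/-!
The traces `tr (G l * (Q + ∑ i ∈ s, x i • G i)⁻¹)` satisfy a strict scaling inequality: if `1 < a`
and `y ≤ a • x` on `s`, then `a • (Q + ∑ i ∈ s, x i • G i)` exceeds `Q + ∑ i ∈ s, y i • G i` by a
positive definite matrix (at least `(a - 1) • Q`), and inversion is strictly antitone. Suppose that
positive `x` and `y` give the same products `x l * tr (G l * (Q + ∑ i ∈ s, x i • G i)⁻¹)` but
`x i < y i` for some `i ∈ s`. Then `a := y l / x l > 1` at an index `l ∈ s` where this ratio is
largest, and the scaling inequality makes the product at `l` strictly larger for `y` than for `x`.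
Hence `x` and `y` agree on `s`; the remaining coordinates do not enter the inverse, so the positive
trace can be cancelled from the equation.
-/

section MaximalRatio

variable {ι R E : Type*} [Field R] [LinearOrder R] [IsStrictOrderedRing R]
  [AddCommGroup E] [PartialOrder E] [Module R E] [PosSMulStrictMono R E]

theorem le_of_smul_eq_smul_of_lt_smul {s : Finset ι} {x y : ι → R} {u v : ι → E}
    (hx : ∀ i ∈ s, 0 < x i) (hxy : ∀ i ∈ s, x i • u i = y i • v i)
    (hscale : ∀ a, 1 < a → (∀ i ∈ s, y i ≤ a * x i) → ∀ l ∈ s, u l < a • v l) :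
    ∀ i ∈ s, y i ≤ x i := by
  by_contra! ⟨i, hi, hlt⟩
  obtain ⟨l, hl, hmax⟩ := s.exists_max_image (fun j => y j / x j) ⟨i, hi⟩
  have one_lt_ratio : 1 < y l / x l := ((one_lt_div (hx i hi)).2 hlt).trans_le (hmax i hi)
  have le_ratio_mul : ∀ j ∈ s, y j ≤ y l / x l * x j := fun j hj =>
    (div_le_iff₀ (hx j hj)).1 (hmax j hj)
  refine (hxy l hl).not_lt ?_
  calc x l • u l < x l • (y l / x l) • v l :=
        smul_lt_smul_of_pos_left (hscale _ one_lt_ratio le_ratio_mul l hl) (hx l hl)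
    _ = y l • v l := by rw [smul_smul, mul_div_cancel₀ _ (hx l hl).ne']

end MaximalRatio

section InverseTrace

variable {𝕜 n : Type*} [RCLike 𝕜] [Fintype n] {A B G : Matrix n n 𝕜}

open scoped MatrixOrder Matrix.Norms.L2Operator in
theorem exists_isUnit_conjTranspose_mul_self_of_posDef [DecidableEq n] (hA : A.PosDef) :
    ∃ C : Matrix n n 𝕜, IsUnit C ∧ A = Cᴴ * C := by
  obtain ⟨C, rfl⟩ := CStarAlgebra.nonneg_iff_eq_star_mul_self.mp hA.posSemidef.nonneg
  exact ⟨C, isUnit_of_mul_isUnit_right hA.isUnit, rfl⟩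

theorem trace_mul_pos_of_posSemidef_of_posDef (hG : G.PosSemidef) (hG₀ : G ≠ 0) (hA : A.PosDef) :
    0 < trace (G * A) := by
  classical
  obtain ⟨C, hC, rfl⟩ := exists_isUnit_conjTranspose_mul_self_of_posDef hA
  rw [← Matrix.mul_assoc, trace_mul_comm, ← Matrix.mul_assoc]
  have conj_posSemidef : (C * G * Cᴴ).PosSemidef := hG.mul_mul_conjTranspose_same C
  have conj_ne_zero : C * G * Cᴴ ≠ 0 := by
    have hCH : IsUnit Cᴴ := hC.star
    rwa [Ne, hCH.mul_left_eq_zero, hC.mul_right_eq_zero]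
  exact conj_posSemidef.trace_nonneg.lt_of_ne' (mt conj_posSemidef.trace_eq_zero_iff.1 conj_ne_zero)

variable [DecidableEq n]

theorem posDef_inv_sub_inv (hA : A.PosDef) (hBA : (B - A).PosDef) : (A⁻¹ - B⁻¹).PosDef := by
  have hM : ((B - A)⁻¹ + A⁻¹).PosDef := hBA.inv.add hA.inv
  have woodbury : A⁻¹ - B⁻¹ = A⁻¹ * ((B - A)⁻¹ + A⁻¹)⁻¹ * star A⁻¹ := by
    have h := add_mul_mul_inv_eq_sub A 1 (B - A) 1 hA.isUnit hBA.isUnit (by simpa using hM.isUnit)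
    simp only [Matrix.one_mul, Matrix.mul_one, add_sub_cancel] at h
    rw [h, sub_sub_cancel, star_eq_conjTranspose, hA.inv.isHermitian.eq]
  rw [woodbury, hA.inv.isUnit.posDef_star_right_conjugate_iff]
  exact hM.inv

theorem trace_mul_inv_lt_trace_mul_inv (hG : G.PosSemidef) (hG₀ : G ≠ 0) (hA : A.PosDef)
    (hBA : (B - A).PosDef) : trace (G * B⁻¹) < trace (G * A⁻¹) := by
  rw [← sub_pos, ← trace_sub, ← Matrix.mul_sub]
  exact trace_mul_pos_of_posSemidef_of_posDef hG hG₀ (posDef_inv_sub_inv hA hBA)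

end InverseTrace

section FixedPoint

variable {𝕜 n ι : Type*} [RCLike 𝕜] {Q : Matrix n n 𝕜}
  {G : ι → Matrix n n 𝕜} {s : Finset ι} {x y : ι → ℝ}

theorem posDef_add_sum_smul (hQ : Q.PosDef) (hG : ∀ i ∈ s, (G i).PosSemidef)
    (hx : ∀ i ∈ s, 0 ≤ x i) : (Q + ∑ i ∈ s, x i • G i).PosDef :=
  hQ.add_posSemidef (posSemidef_sum s fun i hi => (hG i hi).smul (hx i hi))

theorem posDef_smul_add_sum_sub_add_sum (hQ : Q.PosDef) (hG : ∀ i ∈ s, (G i).PosSemidef) {a : ℝ}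
    (ha : 1 < a) (hyx : ∀ i ∈ s, y i ≤ a * x i) :
    (a • (Q + ∑ i ∈ s, x i • G i) - (Q + ∑ i ∈ s, y i • G i)).PosDef := by
  have expand : a • (Q + ∑ i ∈ s, x i • G i) - (Q + ∑ i ∈ s, y i • G i) =
      (a - 1) • Q + ∑ i ∈ s, (a * x i - y i) • G i := by
    simp only [sub_smul, Finset.sum_sub_distrib, smul_add, Finset.smul_sum, mul_smul, one_smul]
    abel
  rw [expand]
  exact posDef_add_sum_smul (hQ.smul (sub_pos.2 ha)) hG fun i hi => sub_nonneg.2 (hyx i hi)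

variable [Fintype n] [DecidableEq n]

theorem trace_mul_inv_add_sum_lt_smul (hQ : Q.PosDef) (hG : ∀ i ∈ s, (G i).PosSemidef)
    (hy : ∀ i ∈ s, 0 ≤ y i) {a : ℝ} (ha : 1 < a) (hyx : ∀ i ∈ s, y i ≤ a * x i)
    {H : Matrix n n 𝕜} (hH : H.PosSemidef) (hH₀ : H ≠ 0) :
    trace (H * (Q + ∑ i ∈ s, x i • G i)⁻¹) < a • trace (H * (Q + ∑ i ∈ s, y i • G i)⁻¹) := by
  have ha₀ : 0 < a := one_pos.trans ha
  have hx : ∀ i ∈ s, 0 ≤ x i := fun i hi =>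
    nonneg_of_mul_nonneg_right ((hy i hi).trans (hyx i hi)) ha₀
  have inv_smul_eq : (a • (Q + ∑ i ∈ s, x i • G i))⁻¹ = a⁻¹ • (Q + ∑ i ∈ s, x i • G i)⁻¹ :=
    inv_eq_left_inv (by
      rw [smul_mul_smul_comm, inv_mul_cancel₀ ha₀.ne', one_smul, nonsing_inv_mul _
        ((isUnit_iff_isUnit_det _).1 (posDef_add_sum_smul hQ hG hx).isUnit)])
  have h := trace_mul_inv_lt_trace_mul_inv hH hH₀ (posDef_add_sum_smul hQ hG hy)
    (posDef_smul_add_sum_sub_add_sum hQ hG ha hyx)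
  rwa [inv_smul_eq, Matrix.mul_smul, trace_smul, inv_smul_lt_iff_of_pos ha₀] at h

theorem le_of_smul_trace_mul_inv_eq (hQ : Q.PosDef) (hG : ∀ i ∈ s, (G i).PosSemidef)
    (hG₀ : ∀ i ∈ s, G i ≠ 0) (hx : ∀ i ∈ s, 0 < x i) (hy : ∀ i ∈ s, 0 ≤ y i)
    (hxy : ∀ l ∈ s, x l • trace (G l * (Q + ∑ i ∈ s, x i • G i)⁻¹) =
      y l • trace (G l * (Q + ∑ i ∈ s, y i • G i)⁻¹)) :
    ∀ i ∈ s, y i ≤ x i :=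
  le_of_smul_eq_smul_of_lt_smul hx hxy fun _ ha hyx l hl =>
    trace_mul_inv_add_sum_lt_smul hQ hG hy ha hyx (hG l hl) (hG₀ l hl)

theorem stmt14_general (hQ : Q.PosDef) (hG : ∀ i, (G i).PosSemidef) (hG₀ : ∀ i, G i ≠ 0) :
    Set.InjOn (fun (x : ι → ℝ) l => x l • trace (G l * (Q + ∑ i ∈ s, x i • G i)⁻¹))
      {x | ∀ i ∈ s, 0 < x i} := by
  intro x hx y hy hxy
  have x_le_y : ∀ i ∈ s, x i ≤ y i :=
    le_of_smul_trace_mul_inv_eq hQ (fun i _ => hG i) (fun i _ => hG₀ i) hy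
      (fun i hi => (hx i hi).le) fun l _ => (congrFun hxy l).symm
  have y_le_x : ∀ i ∈ s, y i ≤ x i :=
    le_of_smul_trace_mul_inv_eq hQ (fun i _ => hG i) (fun i _ => hG₀ i) hx
      (fun i hi => (hy i hi).le) fun l _ => congrFun hxy l
  have sum_eq : ∑ i ∈ s, x i • G i = ∑ i ∈ s, y i • G i :=
    Finset.sum_congr rfl fun i hi => by rw [(x_le_y i hi).antisymm (y_le_x i hi)]
  funext l
  have trace_pos : 0 < trace (G l * (Q + ∑ i ∈ s, y i • G i)⁻¹) :=
    trace_mul_pos_of_posSemidef_of_posDef (hG l) (hG₀ l)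
      (posDef_add_sum_smul hQ (fun i _ => hG i) fun i hi => (hy i hi).le).inv
  refine smul_left_injective ℝ trace_pos.ne' ?_
  simpa only [sum_eq] using congrFun hxy l

end FixedPoint

/-- uniqueness of the strictly positive solution of the fixed-point
system ε_l · tr(G_l (I_N + Σ_{i≠k} ε_i G_i)⁻¹) = 1, l = 1,…,K, for Hermitian
positive definite G_1, …, G_K. -/
theorem stmt14 (N K : ℕ) (G : Fin K → Matrix (Fin N) (Fin N) ℂ)
    (hG : ∀ i, (G i).PosDef) (k : Fin K) :
    ∀ ε ε' : Fin K → ℝ,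
      ((∀ l, 0 < ε l) ∧
        (∀ l : Fin K, (ε l : ℂ) *
          Matrix.trace (G l * (1 + ∑ i ∈ Finset.univ.erase k, ε i • G i)⁻¹) = 1)) →
      ((∀ l, 0 < ε' l) ∧
        (∀ l : Fin K, (ε' l : ℂ) *
          Matrix.trace (G l * (1 + ∑ i ∈ Finset.univ.erase k, ε' i • G i)⁻¹) = 1)) →
      ε = ε' := by
  rintro ε ε' ⟨hε, h⟩ ⟨hε', h'⟩
  exact stmt14_general .one (fun i => (hG i).posSemidef) (fun i hi => by simpa [hi] using h i)
    (fun i _ => hε i) (fun i _ => hε' i)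
    (funext fun l => by simpa only [Complex.real_smul] using (h l).trans (h' l).symm)
end
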